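/- Let α be a non-zero pre-homogeneous dimension vector of Q and let σ be either the weight ⟨α,·⟩ or the weight −⟨·,α⟩. Then there are, up to isomorphism, only finitely many σ-stable representations E_1,…,E_l, their number l satisfies l ≤ |Q_0| − 1, and each E_i is an exceptional representation. -/

import Mathlib

set_option autoImplicit false

noncomputable section

open scoped BigOperators

/-! Basic setup for representations of a quiver with vertex set `V`, arrow set `A`,
tail map `t` and head map `h`, over a field `K`. -/

variable (K : Type) [Field K]
variable {V A : Type} [Fintype V] [DecidableEq V] [Fintype A]

/-- The Euler form of the quiver `(V, A, t, h)`. -/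
def eulerForm {R : Type} [CommRing R] (t h : A → V) (x y : V → R) : R :=
  ∑ i, x i * y i - ∑ a, x (t a) * y (h a)

def natZ (x : V → ℕ) : V → ℤ := fun i => (x i : ℤ)
def intQ (x : V → ℤ) : V → ℚ := fun i => (x i : ℚ)
def natQ (x : V → ℕ) : V → ℚ := fun i => (x i : ℚ)

/-- The weight `⟨α,·⟩`. -/
def weightL (t h : A → V) (α : V → ℤ) : V → ℤ :=
  fun i => eulerForm t h α (fun j => if j = i then 1 else 0)

/-- The weight `−⟨·,α⟩`. -/
def weightR (t h : A → V) (α : V → ℤ) : V → ℤ :=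
  fun i => - eulerForm t h (fun j => if j = i then 1 else 0) α

/-- `IsPathFrom t h i p j` : the list of arrows `p` is a path from `i` to `j`. -/
def IsPathFrom (t h : A → V) : V → List A → V → Prop
  | i, [], j => i = j
  | i, a :: p, j => t a = i ∧ IsPathFrom t h (h a) p j

/-- The quiver has no (nontrivial) oriented cycles. -/
def Acyclic (t h : A → V) : Prop := ∀ (i : V) (p : List A), IsPathFrom t h i p i → p = []

/-- The dimension vector `γ_i` of the projective indecomposable at `i`:
`γ_i(j)` is the number of paths from `i` to `j`. -/
def gammaRoot (t h : A → V) (i : V) : V → ℕ :=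
  fun j => Set.ncard {p : List A | IsPathFrom t h i p j}

/-- A finite-dimensional representation of the quiver `(V, A, t, h)` over `K`. -/
structure QuivRep (K : Type) [Field K] (V A : Type) (t h : A → V) : Type 1 where
  sp : V → Type
  [inst1 : ∀ i, AddCommGroup (sp i)]
  [inst2 : ∀ i, Module K (sp i)]
  [inst3 : ∀ i, FiniteDimensional K (sp i)]
  map : ∀ a : A, sp (t a) →ₗ[K] sp (h a)

attribute [instance] QuivRep.inst1 QuivRep.inst2 QuivRep.inst3

namespace QuivRep

variable {K} {t h : A → V}

/-- The dimension vector of a representation. -/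
def dimVec (X : QuivRep K V A t h) : V → ℕ := fun i => Module.finrank K (X.sp i)

/-- A subrepresentation. -/
structure Sub (X : QuivRep K V A t h) where
  sub : ∀ i, Submodule K (X.sp i)
  le : ∀ a : A, ∀ x ∈ sub (t a), X.map a x ∈ sub (h a)

/-- The dimension vector of a subrepresentation. -/
def Sub.dimVec {X : QuivRep K V A t h} (U : Sub X) : V → ℕ :=
  fun i => Module.finrank K (U.sub i)

/-- The space `Hom_Q(X,Y)` of morphisms of representations, as a submodule of
`Π i, Hom_K(X(i),Y(i))`. -/
def homS (X Y : QuivRep K V A t h) : Submodule K (∀ i, X.sp i →ₗ[K] Y.sp i) where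
  carrier := {φ | ∀ a : A, (φ (h a)).comp (X.map a) = (Y.map a).comp (φ (t a))}
  zero_mem' := by intro a; simp
  add_mem' := by
    intro f g hf hg a
    simp only [Pi.add_apply, LinearMap.add_comp, LinearMap.comp_add, hf a, hg a]
  smul_mem' := by
    intro c f hf a
    simp only [Pi.smul_apply, LinearMap.smul_comp, LinearMap.comp_smul, hf a]

/-- The dimension of `Hom_Q(X,Y)`. -/
def homDim (X Y : QuivRep K V A t h) : ℕ := Module.finrank K (homS X Y)

/-- The map `d^X_Y` from Ringel's canonical exact sequence. -/
def dmap (X Y : QuivRep K V A t h) :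
    (∀ i, X.sp i →ₗ[K] Y.sp i) →ₗ[K] (∀ a : A, X.sp (t a) →ₗ[K] Y.sp (h a)) where
  toFun φ := fun a => (φ (h a)).comp (X.map a) - (Y.map a).comp (φ (t a))
  map_add' f g := by
    funext a
    simp only [Pi.add_apply, LinearMap.add_comp, LinearMap.comp_add]
    abel
  map_smul' c f := by
    funext a
    simp only [Pi.smul_apply, LinearMap.smul_comp, LinearMap.comp_smul, smul_sub,
      RingHom.id_apply]

/-- The dimension of `Ext^1_Q(X,Y)`, i.e. of the cokernel of `d^X_Y`. -/
def extDim (X Y : QuivRep K V A t h) : ℕ :=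
  Module.finrank K ((∀ a : A, X.sp (t a) →ₗ[K] Y.sp (h a)) ⧸ LinearMap.range (dmap X Y))

/-- A rigid representation: `Ext^1_Q(X,X) = 0`. -/
def IsRigid (X : QuivRep K V A t h) : Prop := extDim X X = 0

/-- A Schur representation: `End_Q(X) = K·id`. -/
def IsSchur (X : QuivRep K V A t h) : Prop := homDim X X = 1

/-- An exceptional representation: rigid and Schur. -/
def IsExceptional (X : QuivRep K V A t h) : Prop := IsRigid X ∧ IsSchur X

end QuivRep

/-- `β` is a real Schur root: the dimension vector of an exceptional representation. -/
def isRealSchurRoot (t h : A → V) (β : V → ℕ) : Prop :=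
  ∃ X : QuivRep K V A t h, X.dimVec = β ∧ X.IsExceptional

/-- `ext_Q(α,β)` : the generic (minimal) value of `dim Ext^1_Q` on pairs of
representations of dimension vectors `α`, `β`. -/
def extMin (t h : A → V) (α β : V → ℕ) : ℕ :=
  sInf {n | ∃ X Y : QuivRep K V A t h, X.dimVec = α ∧ Y.dimVec = β ∧ QuivRep.extDim X Y = n}

/-- `hom_Q(α,β)` : the generic (minimal) value of `dim Hom_Q`. -/
def homMin (t h : A → V) (α β : V → ℕ) : ℕ :=
  sInf {n | ∃ X Y : QuivRep K V A t h, X.dimVec = α ∧ Y.dimVec = β ∧ QuivRep.homDim X Y = n}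

/-- `β' ↪ β` : every representation of dimension vector `β` has a subrepresentation of
dimension vector `β'`. -/
def Embeds (t h : A → V) (β' β : V → ℕ) : Prop :=
  ∀ X : QuivRep K V A t h, X.dimVec = β → ∃ U : QuivRep.Sub X, U.dimVec = β'

/-- `σ`-semi-stability of a representation. -/
def IsSemistable {t h : A → V} (σ : V → ℤ) (X : QuivRep K V A t h) : Prop :=
  (∑ i, σ i * (X.dimVec i : ℤ)) = 0 ∧
  ∀ U : QuivRep.Sub X, (∑ i, σ i * (U.dimVec i : ℤ)) ≤ 0

/-- `σ`-stability of a representation. -/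
def IsStable {t h : A → V} (σ : V → ℤ) (X : QuivRep K V A t h) : Prop :=
  (∑ i, σ i * (X.dimVec i : ℤ)) = 0 ∧ X.dimVec ≠ (fun _ => 0) ∧
  ∀ U : QuivRep.Sub X, U.dimVec ≠ (fun _ => 0) → U.dimVec ≠ X.dimVec →
    (∑ i, σ i * (U.dimVec i : ℤ)) < 0

/-- Isomorphism of representations. -/
def RepIso {t h : A → V} (X Y : QuivRep K V A t h) : Prop :=
  ∃ e : ∀ i, X.sp i ≃ₗ[K] Y.sp i,
    ∀ (a : A) (x : X.sp (t a)), e (h a) (X.map a x) = Y.map a (e (t a) x)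

/-- A quiver exceptional sequence of dimension vectors. -/
def IsQES (t h : A → V) {l : ℕ} (b : Fin l → V → ℕ) : Prop :=
  (∀ j, isRealSchurRoot K t h (b j)) ∧
  ∀ i j : Fin l, i < j →
    homMin K t h (b i) (b j) = 0 ∧ extMin K t h (b i) (b j) = 0 ∧
      eulerForm t h (natZ (b j)) (natZ (b i)) ≤ 0

/-- The cone of nonnegative rational linear combinations of a finite set of integral
vectors. -/
def coneOf (C : Finset (V → ℤ)) : Set (V → ℚ) :=
  {x | ∃ lam : (V → ℤ) → ℚ, (∀ c, 0 ≤ lam c) ∧ x = ∑ c ∈ C, lam c • intQ c}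

/-- A compatible subset of the set `Ψ(Q)_{≥ -1}` of almost positive real Schur roots. -/
def IsCompatible (t h : A → V) (C : Finset (V → ℤ)) : Prop :=
  (∀ x ∈ C, (∃ β : V → ℕ, isRealSchurRoot K t h β ∧ x = natZ β) ∨
      (∃ i : V, x = fun j => -(gammaRoot t h i j : ℤ))) ∧
  (∀ x ∈ C, ∀ y ∈ C, x ≠ y →
    (∀ β₁ β₂ : V → ℕ, isRealSchurRoot K t h β₁ → isRealSchurRoot K t h β₂ →
      x = natZ β₁ → y = natZ β₂ → extMin K t h β₁ β₂ = 0) ∧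
    (∀ (β : V → ℕ) (i : V), isRealSchurRoot K t h β →
      x = natZ β → y = (fun j => -(gammaRoot t h i j : ℤ)) → β i = 0))

/-- The domain of semi-invariants `D(β) ⊆ ℚ^{Q_0}`. -/
def Dom (t h : A → V) (β : V → ℕ) : Set (V → ℚ) :=
  {x | eulerForm t h x (natQ β) = 0 ∧
    ∀ β' : V → ℕ, Embeds K t h β' β → eulerForm t h x (natQ β') ≤ 0}

/-- A quiver exceptional set: a subset of `Ψ(Q)_{≥ -1}` of the form
`{β_1,…,β_l, −γ_{i_{l+1}},…,−γ_{i_m}}` with `β_j(i_k) = 0` and whose real-Schur-root part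
can be ordered into a quiver exceptional sequence. -/
def IsQExcSet (t h : A → V) (E : Finset (V → ℤ)) : Prop :=
  ∃ (l m : ℕ) (b : Fin l → V → ℕ) (g : Fin m → V),
    Function.Injective b ∧ Function.Injective g ∧ IsQES K t h b ∧
    (∀ j k, b j (g k) = 0) ∧
    (E : Set (V → ℤ)) =
      (Set.range fun j => natZ (b j)) ∪
      (Set.range fun k => (fun v => -(gammaRoot t h (g k) v : ℤ)))


/-- The underlying graph of the quiver is connected. -/
def IsConnectedQuiver (t h : A → V) : Prop :=
  ∀ i j : V,
    Relation.ReflTransGen (fun u v => ∃ a, (t a = u ∧ h a = v) ∨ (t a = v ∧ h a = u)) i j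

/-- Morphisms of representations. -/
structure RepHom {K : Type} [Field K] {V A : Type} {t h : A → V}
    (X Y : QuivRep K V A t h) : Type where
  app : ∀ i, X.sp i →ₗ[K] Y.sp i
  comm : ∀ a : A, (app (h a)).comp (X.map a) = (Y.map a).comp (app (t a))

namespace RepHom

variable {K₀ : Type} [Field K₀] {t h : A → V}

/-- The identity morphism. -/
def idHom (X : QuivRep K₀ V A t h) : RepHom X X :=
  ⟨fun _ => LinearMap.id, fun a => by ext x; simp⟩

/-- Composition of morphisms. -/
def comp {X Y Z : QuivRep K₀ V A t h} (f : RepHom X Y) (g : RepHom Y Z) : RepHom X Z :=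
  ⟨fun i => (g.app i).comp (f.app i), fun a => by
    ext x
    have hf := LinearMap.congr_fun (f.comm a) x
    have hg := LinearMap.congr_fun (g.comm a) (f.app (t a) x)
    simp only [LinearMap.comp_apply] at hf hg ⊢
    rw [hf, hg]⟩

/-- Sum of morphisms. -/
def add {X Y : QuivRep K₀ V A t h} (f g : RepHom X Y) : RepHom X Y :=
  ⟨fun i => f.app i + g.app i, fun a => by
    simp only [LinearMap.add_comp, LinearMap.comp_add, f.comm a, g.comm a]⟩

/-- Scalar multiple of a morphism. -/
def smul {X Y : QuivRep K₀ V A t h} (c : K₀) (f : RepHom X Y) : RepHom X Y :=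
  ⟨fun i => c • f.app i, fun a => by
    simp only [LinearMap.smul_comp, LinearMap.comp_smul, f.comm a]⟩

end RepHom

/-- The number of arrows `i → j` in the Ext-quiver `Q(𝓔)` of a sequence of dimension
vectors: `−⟨β_i, β_j⟩` for `i ≠ j`. -/
def extMult (t h : A → V) {l : ℕ} (b : Fin l → V → ℕ) (i j : Fin l) : ℕ :=
  if i = j then 0 else (-(eulerForm t h (natZ (b i)) (natZ (b j)))).toNat

/-- The arrow set of the Ext-quiver `Q(𝓔)`. -/
abbrev ExtArrow (t h : A → V) {l : ℕ} (b : Fin l → V → ℕ) : Type :=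
  (i : Fin l) × (j : Fin l) × Fin (extMult t h b i j)

/-- The representation space `rep(Q,β)` as a product of matrix spaces. -/
abbrev RepSpace (t h : A → V) (β : V → ℕ) : Type :=
  ∀ a : A, Matrix (Fin (β (h a))) (Fin (β (t a))) K

/-- The (base-change) action of `GL(β)` on `rep(Q,β)`. -/
def glAct (t h : A → V) {β : V → ℕ}
    (g : ∀ i, Matrix.GeneralLinearGroup (Fin (β i)) K) (W : RepSpace K t h β) :
    RepSpace K t h β :=
  fun a => (g (h a) : Matrix (Fin (β (h a))) (Fin (β (h a))) K) * W a *
    (((g (t a))⁻¹ : Matrix.GeneralLinearGroup (Fin (β (t a))) K) :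
      Matrix (Fin (β (t a))) (Fin (β (t a))) K)

/-- A polynomial function on `rep(Q,β)`. -/
def IsPolyFun (t h : A → V) {β : V → ℕ} (f : RepSpace K t h β → K) : Prop :=
  ∃ P : MvPolynomial ((a : A) × (Fin (β (h a)) × Fin (β (t a)))) K,
    ∀ W, f W = MvPolynomial.eval (fun x => W x.1 x.2.1 x.2.2) P

/-- The weight space `SI(Q,β)_σ` of semi-invariant polynomial functions of weight `σ`. -/
def SIweight (t h : A → V) (β : V → ℕ) (σ : V → ℤ) :
    Submodule K (RepSpace K t h β → K) where
  carrier := {f | IsPolyFun K t h f ∧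
    ∀ (g : ∀ i, Matrix.GeneralLinearGroup (Fin (β i)) K) (W : RepSpace K t h β),
      f (glAct K t h g W) =
        (((∏ i, (Matrix.GeneralLinearGroup.det (g i)) ^ σ i : Kˣ) : K)) * f W}
  zero_mem' := by
    refine ⟨⟨0, by simp⟩, by simp⟩
  add_mem' := by
    rintro f g ⟨⟨P, hP⟩, hf⟩ ⟨⟨Q, hQ⟩, hg⟩
    refine ⟨⟨P + Q, fun W => ?_⟩, fun gg W => ?_⟩
    · simp [hP W, hQ W]
    · simp only [Pi.add_apply, hf gg W, hg gg W]; ring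
  smul_mem' := by
    rintro c f ⟨⟨P, hP⟩, hf⟩
    refine ⟨⟨MvPolynomial.C c * P, fun W => ?_⟩, fun gg W => ?_⟩
    · simp [hP W]
    · simp only [Pi.smul_apply, hf gg W, smul_eq_mul]; ring

/-- Entry of a matrix accessed through natural-number indices. -/
def entryN {m n : ℕ} (M : Matrix (Fin m) (Fin n) K) (r c : ℕ) : K :=
  if hr : r < m then (if hc : c < n then M ⟨r, hr⟩ ⟨c, hc⟩ else 0) else 0

/-- The matrix of the map `d^V_W` (with `V` of dimension vector `α` varying and `W` of
dimension vector `w` fixed), in the standard bases. -/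
def schofieldMatrix (t h : A → V) {α w : V → ℕ}
    (Vm : RepSpace K t h α) (W : RepSpace K t h w) :
    Matrix ((a : A) × (Fin (w (h a)) × Fin (α (t a)))) ((i : V) × (Fin (w i) × Fin (α i))) K :=
  fun r c =>
    (if c.1 = h r.1 ∧ (c.2.1 : ℕ) = (r.2.1 : ℕ) then
      entryN K (Vm r.1) (c.2.2 : ℕ) (r.2.2 : ℕ) else 0)
    - (if c.1 = t r.1 ∧ (c.2.2 : ℕ) = (r.2.2 : ℕ) then
      entryN K (W r.1) (r.2.1 : ℕ) (c.2.1 : ℕ) else 0)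

/-- The Schofield semi-invariant `c_W : rep(Q,α) → K`, `V ↦ det d^V_W` (defined when
`⟨α, dim W⟩ = 0`, i.e. when `d^V_W` is a square matrix). -/
def schofieldSI (t h : A → V) {α w : V → ℕ} (W : RepSpace K t h w)
    (Vm : RepSpace K t h α) : K :=
  if hc : Fintype.card ((i : V) × (Fin (w i) × Fin (α i))) =
      Fintype.card ((a : A) × (Fin (w (h a)) × Fin (α (t a)))) then
    ((schofieldMatrix K t h Vm W).submatrix (Fintype.equivOfCardEq hc) id).det
  else 0

/-- The representation of `Q` attached to a point of `rep(Q,β)`. -/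
def toRep (t h : A → V) {β : V → ℕ} (W : RepSpace K t h β) : QuivRep K V A t h where
  sp i := Fin (β i) → K
  map a := Matrix.mulVecLin (W a)

/-! Let `M` be rigid with `α = dim M`. The stable representations for `⟨α, ·⟩` are right
perpendicular to `M`, and every nonzero map to such an `S` from some `X` with `Ext¹(M, X) = 0` is
surjective. Starting from an indecomposable projective with a nonzero map to `S` and repeatedly
extending by `M`, as Bongartz does to complete a partial tilting module, one reaches a `P` with
`Ext¹(M, P) = 0`, with `Hom(P, S) ≠ 0`, and with `Ext¹(P, X) = 0` for all `X` right perpendicular to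
`M`. The kernel of a nonzero map from such a `P` to a stable `S'` inherits the first and the last
property, so if `P` has the smallest possible dimension, this kernel has no nonzero map to `S`. For
`S' = S` this gives `Ext¹(S, S) = 0`. In general it shows that every map `P → S` factors through
`S'`, whence `S' ≅ S`.

For pairwise non-isomorphic stable `S₁, …, S_l` with covers `P₁, …, P_l`, the matrix `⟨P_j, S_m⟩` is
therefore diagonal with nonzero diagonal, while `⟨M, S_m⟩ = 0 ≠ ⟨M, M⟩`. Hence `dim M` and the
`dim S_m` are linearly independent in `ℤ^{Q₀}`, so `l < |Q₀|`. Duality over the base field, which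
passes to the opposite quiver, turns the weight `-⟨·, α⟩` into `⟨α, ·⟩`. -/

section LinearAlgebra

variable {k U V W M : Type*} [Field k] [AddCommGroup U] [Module k U] [AddCommGroup V] [Module k V]
  [AddCommGroup W] [Module k W] [AddCommGroup M] [Module k M] {f : U →ₗ[k] V} {g : V →ₗ[k] W}

theorem exists_comp_eq_of_injective (hf : Function.Injective f) (φ : U →ₗ[k] M) :
    ∃ φ' : V →ₗ[k] M, φ' ∘ₗ f = φ := by
  obtain ⟨r, hr⟩ := f.exists_leftInverse_of_injective (LinearMap.ker_eq_bot.2 hf)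
  exact ⟨φ ∘ₗ r, by rw [LinearMap.comp_assoc, hr, LinearMap.comp_id]⟩

theorem exists_comp_eq_of_exact_of_surjective (hfg : Function.Exact f g)
    (hg : Function.Surjective g) {φ : V →ₗ[k] M} (hφ : φ ∘ₗ f = 0) :
    ∃ φ' : W →ₗ[k] M, φ' ∘ₗ g = φ :=
  (LinearMap.exact_lcomp_of_exact_of_surjective M hfg hg φ).1 hφ

theorem exists_comp_eq_of_exact (hfg : Function.Exact f g)
    {φ : M →ₗ[k] V} (hφ : g ∘ₗ φ = 0) : ∃ φ' : M →ₗ[k] U, f ∘ₗ φ' = φ := by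
  have hrange : ∀ x, φ x ∈ LinearMap.range f := fun x => (hfg _).1 (LinearMap.congr_fun hφ x)
  obtain ⟨φ', hφ'⟩ := Module.projective_lifting_property f.rangeRestrict
    (φ.codRestrict _ hrange) f.surjective_rangeRestrict
  exact ⟨φ', by ext x; exact congrArg Subtype.val (LinearMap.congr_fun hφ' x)⟩

theorem finrank_quotient_lt_finrank_quotient [FiniteDimensional k V] {p : Submodule k V}
    {q : Submodule k W} {T : V →ₗ[k] W} (hT : p ≤ q.comap T)
    (hsurj : ∀ w, ∃ v, w - T v ∈ q) {v : V} (hvp : v ∉ p) (hvq : T v ∈ q) :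
    Module.finrank k (W ⧸ q) < Module.finrank k (V ⧸ p) := by
  have hrange : LinearMap.range (p.mapQ q T hT) = ⊤ := by
    rw [LinearMap.range_eq_top]
    intro w
    obtain ⟨w, rfl⟩ := q.mkQ_surjective w
    obtain ⟨v, hv⟩ := hsurj w
    exact ⟨p.mkQ v, ((Submodule.Quotient.eq q).2 hv).symm⟩
  have hker : LinearMap.ker (p.mapQ q T hT) ≠ ⊥ := by
    refine fun hbot => hvp ((Submodule.Quotient.mk_eq_zero p).1 ?_)
    exact LinearMap.ker_eq_bot'.1 hbot _ ((Submodule.Quotient.mk_eq_zero q).2 hvq)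
  have hadd := (p.mapQ q T hT).finrank_range_add_finrank_ker
  rw [hrange, finrank_top] at hadd
  have := Submodule.one_le_finrank_iff.2 hker
  omega

end LinearAlgebra

section Morphisms

variable {k : Type} [Field k] {Q₀ Q₁ : Type} {t h : Q₁ → Q₀}
  {X Y Z M : QuivRep k Q₀ Q₁ t h}

open Function QuivRep

namespace RepHom

attribute [ext] RepHom

instance : Zero (RepHom X Y) := ⟨⟨0, fun a => by simp⟩⟩

theorem comp_zero (f : RepHom X Y) : f.comp (0 : RepHom Y Z) = 0 :=
  RepHom.ext (funext fun i => LinearMap.zero_comp (f.app i))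

theorem app_map (f : RepHom X Y) (a : Q₁) (x : X.sp (t a)) :
    f.app (h a) (X.map a x) = Y.map a (f.app (t a) x) :=
  LinearMap.congr_fun (f.comm a) x

/-- The kernel of a morphism, as a subrepresentation of its source. -/
def ker (f : RepHom X Y) : Sub X where
  sub i := LinearMap.ker (f.app i)
  le a x hx := by rw [LinearMap.mem_ker, app_map, LinearMap.mem_ker.1 hx, map_zero]

/-- The image of a morphism, as a subrepresentation of its target. -/
def range (f : RepHom X Y) : Sub Y where
  sub i := LinearMap.range (f.app i)
  le a := by
    rintro _ ⟨x, rfl⟩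
    exact ⟨X.map a x, f.app_map a x⟩

theorem repIso_of_bijective (f : RepHom X Y) (hf : ∀ i, Bijective (f.app i)) : RepIso k X Y :=
  ⟨fun i => LinearEquiv.ofBijective (f.app i) (hf i), f.app_map⟩

end RepHom

namespace QuivRep.Sub

/-- A subrepresentation regarded as a representation in its own right. -/
def toRep (U : Sub X) : QuivRep k Q₀ Q₁ t h where
  sp i := U.sub i
  map a := (X.map a).restrict (U.le a)

/-- The inclusion morphism of a subrepresentation. -/
def subtype (U : Sub X) : RepHom U.toRep X where
  app i := (U.sub i).subtype
  comm _ := rfl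

end QuivRep.Sub

/-- A morphism regarded as a morphism onto its image. -/
def RepHom.rangeRestrict (f : RepHom X Y) : RepHom X f.range.toRep where
  app i := (f.app i).rangeRestrict
  comm a := LinearMap.ext fun x => Subtype.ext (f.app_map a x)

/-- The sequence `0 → X → Y → Z → 0` of representations is exact. -/
structure ShortExact (f : RepHom X Y) (g : RepHom Y Z) : Prop where
  injective : ∀ i, Injective (f.app i)
  exact : ∀ i, Exact (f.app i) (g.app i)
  surjective : ∀ i, Surjective (g.app i)

theorem ShortExact.comp_eq_zero {f : RepHom X Y} {g : RepHom Y Z} (hfg : ShortExact f g)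
    (i : Q₀) : g.app i ∘ₗ f.app i = 0 :=
  (hfg.exact i).linearMap_comp_eq_zero

theorem RepHom.shortExact_ker (f : RepHom X Y) (hf : ∀ i, Surjective (f.app i)) :
    ShortExact f.ker.subtype f where
  injective i := (f.ker.sub i).subtype_injective
  exact i := (f.app i).exact_subtype_ker_map
  surjective := hf

theorem QuivRep.homS_eq_ker_dmap (X Y : QuivRep k Q₀ Q₁ t h) :
    homS X Y = LinearMap.ker (dmap X Y) := by
  ext φ
  exact ⟨fun hφ => funext fun a => sub_eq_zero.2 (hφ a),
    fun hφ a => sub_eq_zero.1 (congrFun hφ a)⟩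

/-- A family of linear maps killed by `d^X_Y`, regarded as a morphism. -/
def RepHom.ofDmapEqZero (φ : ∀ i, X.sp i →ₗ[k] Y.sp i) (hφ : dmap X Y φ = 0) : RepHom X Y where
  app := φ
  comm a := sub_eq_zero.1 (congrFun hφ a)

theorem RepHom.dmap_app (f : RepHom X Y) : dmap X Y f.app = 0 :=
  funext fun a => sub_eq_zero.2 (f.comm a)

theorem dmap_postcomp (g : RepHom Y Z) (φ : ∀ i, M.sp i →ₗ[k] Y.sp i) :
    dmap M Z (fun i => g.app i ∘ₗ φ i) = fun a => g.app (h a) ∘ₗ dmap M Y φ a := by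
  funext a
  ext x
  simp [dmap, g.app_map]

theorem dmap_precomp (f : RepHom X Y) (φ : ∀ i, Y.sp i →ₗ[k] M.sp i) :
    dmap X M (fun i => φ i ∘ₗ f.app i) = fun a => dmap Y M φ a ∘ₗ f.app (t a) := by
  funext a
  ext x
  simp [dmap, f.app_map]

theorem ShortExact.exists_desc {f : RepHom X Y} {g : RepHom Y Z} (hfg : ShortExact f g)
    (u : RepHom Y M) (hu : f.comp u = 0) : ∃ v : RepHom Z M, g.comp v = u := by
  choose v hv using fun i => exists_comp_eq_of_exact_of_surjective (hfg.exact i)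
    (hfg.surjective i) (congrFun (congrArg RepHom.app hu) i)
  have hdv : dmap Z M v = 0 := funext fun a =>
    (LinearMap.cancel_right (hfg.surjective (t a))).1 <| by
      rw [← congrFun (dmap_precomp g v) a, funext hv, u.dmap_app]
      rfl
  exact ⟨.ofDmapEqZero v hdv, RepHom.ext (funext hv)⟩

theorem QuivRep.exists_nontrivial (hX : X.dimVec ≠ fun _ => 0) : ∃ i, Nontrivial (X.sp i) := by
  obtain ⟨i, hi⟩ := Function.ne_iff.1 hX
  exact ⟨i, Module.nontrivial_of_finrank_pos (Nat.pos_of_ne_zero hi)⟩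

theorem RepHom.idHom_ne_zero (hX : X.dimVec ≠ fun _ => 0) : idHom X ≠ 0 := fun h0 => by
  obtain ⟨i, hi⟩ := exists_nontrivial hX
  obtain ⟨x, hx⟩ := exists_ne (0 : X.sp i)
  exact hx (LinearMap.congr_fun (congrFun (congrArg RepHom.app h0) i) x)

end Morphisms

section Vanishing

variable {k : Type} [Field k] {Q₀ Q₁ : Type} {t h : Q₁ → Q₀} {X Y Z M : QuivRep k Q₀ Q₁ t h}

open Function QuivRep

theorem homDim_eq_zero_iff [Finite Q₀] : homDim X Y = 0 ↔ ∀ f : RepHom X Y, f = 0 := by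
  rw [homDim, Submodule.finrank_eq_zero, Submodule.eq_bot_iff]
  exact ⟨fun H f => RepHom.ext (H f.app f.comm), fun H φ hφ => congrArg RepHom.app (H ⟨φ, hφ⟩)⟩

theorem homDim_ne_zero_iff [Finite Q₀] : homDim X Y ≠ 0 ↔ ∃ f : RepHom X Y, f ≠ 0 := by
  rw [Ne, homDim_eq_zero_iff, not_forall]

theorem eq_zero_of_dmap_eq_zero [Finite Q₀] (hXY : homDim X Y = 0)
    {φ : ∀ i, X.sp i →ₗ[k] Y.sp i} (hφ : dmap X Y φ = 0) : φ = 0 :=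
  congrArg RepHom.app (homDim_eq_zero_iff.1 hXY (.ofDmapEqZero φ hφ))

theorem extDim_eq_zero_iff [Finite Q₁] : extDim X Y = 0 ↔ Surjective (dmap X Y) := by
  rw [extDim, Module.finrank_zero_iff, Submodule.Quotient.subsingleton_iff,
    LinearMap.range_eq_top]

variable [Finite Q₁]

theorem extDim_eq_zero_of_surjective (g : RepHom Y Z) (hg : ∀ i, Surjective (g.app i))
    (hMY : extDim M Y = 0) : extDim M Z = 0 := by
  rw [extDim_eq_zero_iff] at hMY ⊢
  intro ψ
  choose ψ' hψ' using fun a =>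
    Module.projective_lifting_property (g.app (h a)) (ψ a) (hg (h a))
  obtain ⟨φ, rfl⟩ := hMY ψ'
  exact ⟨_, (dmap_postcomp g φ).trans (funext hψ')⟩

theorem extDim_eq_zero_of_injective (f : RepHom X Y) (hf : ∀ i, Injective (f.app i))
    (hYM : extDim Y M = 0) : extDim X M = 0 := by
  rw [extDim_eq_zero_iff] at hYM ⊢
  intro ψ
  choose ψ' hψ' using fun a => exists_comp_eq_of_injective (hf (t a)) (ψ a)
  obtain ⟨φ, rfl⟩ := hYM ψ'
  exact ⟨_, (dmap_precomp f φ).trans (funext hψ')⟩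

namespace ShortExact

variable {f : RepHom X Y} {g : RepHom Y Z}

theorem extDim_left_eq_zero [Finite Q₀] (hfg : ShortExact f g) (hMZ : homDim M Z = 0)
    (hMY : extDim M Y = 0) : extDim M X = 0 := by
  rw [extDim_eq_zero_iff] at hMY ⊢
  intro ψ
  obtain ⟨φ, hφ⟩ := hMY fun a => f.app (h a) ∘ₗ ψ a
  have hgφ : (fun i => g.app i ∘ₗ φ i) = 0 := eq_zero_of_dmap_eq_zero hMZ <| by
    rw [dmap_postcomp, hφ]
    funext a
    rw [← LinearMap.comp_assoc, hfg.comp_eq_zero, LinearMap.zero_comp]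
    rfl
  choose φ' hφ' using fun i => exists_comp_eq_of_exact (hfg.exact i) (congrFun hgφ i)
  refine ⟨φ', funext fun a => (LinearMap.cancel_left (hfg.injective (h a))).1 ?_⟩
  exact (congrFun (dmap_postcomp f φ') a).symm.trans (by rw [funext hφ', hφ])

theorem extDim_right_eq_zero [Finite Q₀] (hfg : ShortExact f g) (hXM : homDim X M = 0)
    (hYM : extDim Y M = 0) : extDim Z M = 0 := by
  rw [extDim_eq_zero_iff] at hYM ⊢
  intro ψ
  obtain ⟨φ, hφ⟩ := hYM fun a => ψ a ∘ₗ g.app (t a)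
  have hφf : (fun i => φ i ∘ₗ f.app i) = 0 := eq_zero_of_dmap_eq_zero hXM <| by
    rw [dmap_precomp, hφ]
    funext a
    rw [LinearMap.comp_assoc, hfg.comp_eq_zero, LinearMap.comp_zero]
    rfl
  choose φ' hφ' using fun i =>
    exists_comp_eq_of_exact_of_surjective (hfg.exact i) (hfg.surjective i) (congrFun hφf i)
  refine ⟨φ', funext fun a => (LinearMap.cancel_right (hfg.surjective (t a))).1 ?_⟩
  exact (congrFun (dmap_precomp g φ') a).symm.trans (by rw [funext hφ', hφ])

theorem extDim_middle_eq_zero (hfg : ShortExact f g) (hXM : extDim X M = 0)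
    (hZM : extDim Z M = 0) : extDim Y M = 0 := by
  rw [extDim_eq_zero_iff] at hXM hZM ⊢
  intro ψ
  obtain ⟨φ, hφ⟩ := hXM fun a => ψ a ∘ₗ f.app (t a)
  choose φ' hφ' using fun i => exists_comp_eq_of_injective (hfg.injective i) (φ i)
  have hψf : ∀ a, (ψ a - dmap Y M φ' a) ∘ₗ f.app (t a) = 0 := fun a => by
    rw [LinearMap.sub_comp, ← congrFun (dmap_precomp f φ') a, funext hφ', hφ, sub_self]
  choose ψ' hψ' using fun a => exists_comp_eq_of_exact_of_surjective (hfg.exact (t a))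
    (hfg.surjective (t a)) (hψf a)
  obtain ⟨φ'', rfl⟩ := hZM ψ'
  refine ⟨φ' + fun i => φ'' i ∘ₗ g.app i, ?_⟩
  rw [map_add, dmap_precomp, funext hψ']
  exact add_sub_cancel _ _

theorem exists_extend (hfg : ShortExact f g) (hZM : extDim Z M = 0)
    (u : RepHom X M) : ∃ v : RepHom Y M, f.comp v = u := by
  choose φ hφ using fun i => exists_comp_eq_of_injective (hfg.injective i) (u.app i)
  have hφf : ∀ a, dmap Y M φ a ∘ₗ f.app (t a) = 0 := fun a => by
    rw [← congrFun (dmap_precomp f φ) a, funext hφ, u.dmap_app]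
    rfl
  choose ψ hψ using fun a => exists_comp_eq_of_exact_of_surjective (hfg.exact (t a))
    (hfg.surjective (t a)) (hφf a)
  obtain ⟨φ', rfl⟩ := extDim_eq_zero_iff.1 hZM ψ
  refine ⟨.ofDmapEqZero (φ - fun i => φ' i ∘ₗ g.app i) ?_, RepHom.ext <| funext fun i => ?_⟩
  · rw [map_sub, dmap_precomp, funext hψ, sub_eq_zero]
  · change (φ i - φ' i ∘ₗ g.app i) ∘ₗ f.app i = u.app i
    rw [LinearMap.sub_comp, LinearMap.comp_assoc, hfg.comp_eq_zero, LinearMap.comp_zero,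
      sub_zero, hφ]

theorem exists_sub_postcomp_mem_range_dmap (hfg : ShortExact f g) (hMZ : extDim M Z = 0)
    (ψ : ∀ a, M.sp (t a) →ₗ[k] Y.sp (h a)) :
    ∃ ψ' : ∀ a, M.sp (t a) →ₗ[k] X.sp (h a),
      ψ - (fun a => f.app (h a) ∘ₗ ψ' a) ∈ LinearMap.range (dmap M Y) := by
  obtain ⟨φ, hφ⟩ := extDim_eq_zero_iff.1 hMZ fun a => g.app (h a) ∘ₗ ψ a
  choose φ' hφ' using fun i =>
    Module.projective_lifting_property (g.app i) (φ i) (hfg.surjective i)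
  have hgψ : ∀ a, g.app (h a) ∘ₗ (ψ a - dmap M Y φ' a) = 0 := fun a => by
    rw [LinearMap.comp_sub, ← congrFun (dmap_postcomp g φ') a, funext hφ', hφ, sub_self]
  choose ψ' hψ' using fun a => exists_comp_eq_of_exact (hfg.exact (h a)) (hgψ a)
  refine ⟨ψ', φ', ?_⟩
  rw [funext hψ']
  exact (sub_sub_cancel _ _).symm

end ShortExact

end Vanishing

section Extension

variable {k : Type} [Field k] {Q₀ Q₁ : Type} {t h : Q₁ → Q₀} {B M : QuivRep k Q₀ Q₁ t h}

open Function QuivRep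

/-- The middle term of the extension `0 → B → extension ψ → M → 0` whose class in
`Ext¹(M, B)`, the cokernel of `d^M_B`, is represented by `ψ`. -/
def QuivRep.extension (ψ : ∀ a, M.sp (t a) →ₗ[k] B.sp (h a)) : QuivRep k Q₀ Q₁ t h where
  sp i := B.sp i × M.sp i
  map a := (B.map a ∘ₗ LinearMap.fst k _ _ + ψ a ∘ₗ LinearMap.snd k _ _).prod
    (M.map a ∘ₗ LinearMap.snd k _ _)

namespace QuivRep.extension

variable (ψ : ∀ a, M.sp (t a) →ₗ[k] B.sp (h a))

/-- The inclusion of the sub-object of an extension. -/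
def inl : RepHom B (extension ψ) where
  app i := LinearMap.inl k (B.sp i) (M.sp i)
  comm a := LinearMap.ext fun x => by
    change (B.map a x, 0) = (B.map a x + ψ a 0, M.map a 0)
    simp only [map_zero, add_zero]

/-- The projection of an extension onto its quotient. -/
def snd : RepHom (extension ψ) M where
  app i := LinearMap.snd k (B.sp i) (M.sp i)
  comm _ := rfl

theorem shortExact : ShortExact (inl ψ) (snd ψ) where
  injective _ := LinearMap.inl_injective
  exact _ := Exact.inl_snd
  surjective _ := LinearMap.snd_surjective

theorem inl_postcomp_mem_range_dmap :
    (fun a => (inl ψ).app (h a) ∘ₗ ψ a) ∈ LinearMap.range (dmap M (extension ψ)) := by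
  refine ⟨fun i => -LinearMap.inr k (B.sp i) (M.sp i), funext fun a => LinearMap.ext fun x => ?_⟩
  change -(0, M.map a x) - (B.map a (-0) + ψ a (-x), M.map a (-x)) = (ψ a x, 0)
  simp

/-- A non-split extension by a rigid representation kills its own class, which is the step of
Bongartz's completion. -/
theorem extDim_lt [Finite Q₁] (hM : M.IsRigid) (hψ : ψ ∉ LinearMap.range (dmap M B)) :
    extDim M (extension ψ) < extDim M B := by
  let T := LinearMap.piMap (R := k) fun a =>
    LinearMap.compRight (M := M.sp (t a)) k ((inl ψ).app (h a))
  refine finrank_quotient_lt_finrank_quotient (T := T) ?_ (fun ψ' => ?_) hψ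
    (inl_postcomp_mem_range_dmap ψ)
  · rintro _ ⟨φ, rfl⟩
    exact ⟨_, dmap_postcomp (inl ψ) φ⟩
  · exact (shortExact ψ).exists_sub_postcomp_mem_range_dmap hM ψ'

end QuivRep.extension

end Extension

section EulerForm

variable {k : Type} [Field k] {Q₀ Q₁ : Type} [Fintype Q₀] [Fintype Q₁] {t h : Q₁ → Q₀}
  {X Y Z : QuivRep k Q₀ Q₁ t h}

open QuivRep Matrix

theorem homDim_sub_extDim_eq_eulerForm (X Y : QuivRep k Q₀ Q₁ t h) :
    (homDim X Y : ℤ) - extDim X Y = eulerForm t h (natZ X.dimVec) (natZ Y.dimVec) := by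
  have hhom : Module.finrank k (LinearMap.range (dmap X Y)) + homDim X Y =
      ∑ i, X.dimVec i * Y.dimVec i := by
    rw [homDim, homS_eq_ker_dmap, LinearMap.finrank_range_add_finrank_ker,
      Module.finrank_pi_fintype]
    simp only [Module.finrank_linearMap, dimVec]
  have hext : extDim X Y + Module.finrank k (LinearMap.range (dmap X Y)) =
      ∑ a, X.dimVec (t a) * Y.dimVec (h a) := by
    rw [extDim, Submodule.finrank_quotient_add_finrank, Module.finrank_pi_fintype]
    simp only [Module.finrank_linearMap, dimVec]
  simp only [eulerForm, natZ]
  zify at hhom hext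
  linarith

theorem weightL_dotProduct [DecidableEq Q₀] (α x : Q₀ → ℤ) :
    weightL t h α ⬝ᵥ x = eulerForm t h α x := by
  simp only [weightL, eulerForm, dotProduct, sub_mul, Finset.sum_mul, Finset.sum_sub_distrib]
  congr 1
  · simp
  · rw [Finset.sum_comm]
    simp [ite_mul]

theorem neg_weightR [DecidableEq Q₀] (α : Q₀ → ℤ) : -weightR t h α = weightL h t α := by
  funext i
  simp only [weightR, weightL, eulerForm, Pi.neg_apply, neg_neg, mul_comm]

end EulerForm

section Stability

theorem natZ_add {ι : Type} (α β : ι → ℕ) : natZ (α + β) = natZ α + natZ β :=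
  funext fun i => Nat.cast_add (α i) (β i)

theorem RepHom.dimVec_ker_add_dimVec_range {k : Type} [Field k] {Q₀ Q₁ : Type} {t h : Q₁ → Q₀}
    {X Y : QuivRep k Q₀ Q₁ t h} (f : RepHom X Y) : f.ker.dimVec + f.range.dimVec = X.dimVec :=
  funext fun i => (add_comm _ _).trans (f.app i).finrank_range_add_finrank_ker

variable {k : Type} [Field k] {Q₀ Q₁ : Type} [Fintype Q₀] {t h : Q₁ → Q₀}
  {σ : Q₀ → ℤ} {X S S' : QuivRep k Q₀ Q₁ t h}

open Function QuivRep Matrix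

namespace IsStable

theorem dotProduct_dimVec_eq_zero (hS : IsStable k σ S) : σ ⬝ᵥ natZ S.dimVec = 0 := hS.1

theorem dotProduct_dimVec_nonpos (hS : IsStable k σ S) (U : Sub S) :
    σ ⬝ᵥ natZ U.dimVec ≤ 0 := by
  rcases eq_or_ne U.dimVec fun _ => 0 with hbot | hbot
  · simp [hbot, natZ, dotProduct]
  rcases eq_or_ne U.dimVec S.dimVec with htop | htop
  · rw [htop, hS.dotProduct_dimVec_eq_zero]
  · exact (hS.2.2 U hbot htop).le

theorem eq_bot_or_eq_top (hS : IsStable k σ S) (U : Sub S) (hU : 0 ≤ σ ⬝ᵥ natZ U.dimVec) :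
    (∀ i, U.sub i = ⊥) ∨ ∀ i, U.sub i = ⊤ := by
  refine or_iff_not_imp_left.2 fun hbot => ?_
  have hne : U.dimVec ≠ fun _ => 0 := fun h0 =>
    hbot fun i => Submodule.finrank_eq_zero.1 (congrFun h0 i)
  have htop : U.dimVec = S.dimVec := of_not_not fun hlt => (hS.2.2 U hne hlt).not_ge hU
  exact fun i => Submodule.eq_top_of_finrank_eq (congrFun htop i)

theorem surjective_of_nonneg (hS : IsStable k σ S) {f : RepHom X S} (hf : f ≠ 0)
    (hσ : 0 ≤ σ ⬝ᵥ natZ f.range.dimVec) (i : Q₀) : Surjective (f.app i) := by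
  refine LinearMap.range_eq_top.1 ((hS.eq_bot_or_eq_top f.range hσ).resolve_left ?_ i)
  exact fun hbot => hf (RepHom.ext (funext fun i => LinearMap.range_eq_bot.1 (hbot i)))

theorem injective_of_nonneg (hS : IsStable k σ S) {f : RepHom S X} (hf : f ≠ 0)
    (hσ : 0 ≤ σ ⬝ᵥ natZ f.ker.dimVec) (i : Q₀) : Injective (f.app i) := by
  refine LinearMap.ker_eq_bot.1 ((hS.eq_bot_or_eq_top f.ker hσ).resolve_right ?_ i)
  exact fun htop => hf (RepHom.ext (funext fun i => LinearMap.ker_eq_top.1 (htop i)))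

theorem bijective (hS : IsStable k σ S) (hS' : IsStable k σ S') {f : RepHom S S'} (hf : f ≠ 0)
    (i : Q₀) : Bijective (f.app i) := by
  have hdim : natZ S.dimVec = natZ f.ker.dimVec + natZ f.range.dimVec := by
    rw [← f.dimVec_ker_add_dimVec_range, natZ_add]
  have hadd := hS.dotProduct_dimVec_eq_zero
  rw [hdim, dotProduct_add] at hadd
  have hker := hS.dotProduct_dimVec_nonpos f.ker
  have hrange := hS'.dotProduct_dimVec_nonpos f.range
  exact ⟨hS.injective_of_nonneg hf (by linarith) i, hS'.surjective_of_nonneg hf (by linarith) i⟩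

theorem repIso_of_homDim_ne_zero (hS : IsStable k σ S) (hS' : IsStable k σ S')
    (hSS' : homDim S S' ≠ 0) : RepIso k S S' := by
  obtain ⟨f, hf⟩ := homDim_ne_zero_iff.1 hSS'
  exact f.repIso_of_bijective (hS.bijective hS' hf)

theorem exists_eq_smul_id [IsAlgClosed k] (hS : IsStable k σ S) (f : RepHom S S) :
    ∃ c : k, (RepHom.idHom S).smul c = f := by
  obtain ⟨i, hi⟩ := exists_nontrivial hS.2.1
  obtain ⟨c, hc⟩ := Module.End.exists_eigenvalue (f.app i)
  obtain ⟨v, hv⟩ := hc.exists_hasEigenvector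
  refine ⟨c, of_not_not fun hne => hv.2 ?_⟩
  let g := f.add ((RepHom.idHom S).smul (-c))
  have hg : g ≠ 0 := fun h0 => hne <| RepHom.ext <| funext fun j => LinearMap.ext fun x => by
    have hx : f.app j x + -c • x = 0 := LinearMap.congr_fun (congrFun (congrArg RepHom.app h0) j) x
    rw [neg_smul, add_neg_eq_zero] at hx
    exact hx.symm
  refine (hS.bijective hS hg i).1 ?_
  rw [map_zero]
  change f.app i v + -c • v = 0
  rw [hv.apply_eq_smul, neg_smul, add_neg_cancel]

theorem isSchur [IsAlgClosed k] (hS : IsStable k σ S) : S.IsSchur := by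
  refine finrank_eq_one ⟨(RepHom.idHom S).app, (RepHom.idHom S).comm⟩ (fun h0 => ?_) fun φ => ?_
  · exact RepHom.idHom_ne_zero hS.2.1 (RepHom.ext (congrArg Subtype.val h0))
  · obtain ⟨c, hc⟩ := hS.exists_eq_smul_id ⟨φ, φ.2⟩
    exact ⟨c, Subtype.ext (congrArg RepHom.app hc)⟩

end IsStable

end Stability

section Projective

variable {Q₀ Q₁ : Type} {t h : Q₁ → Q₀}

open Function

theorem isPathFrom_append {i j : Q₀} {p q : List Q₁} :
    IsPathFrom t h i (p ++ q) j ↔ ∃ m, IsPathFrom t h i p m ∧ IsPathFrom t h m q j := by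
  induction p generalizing i with
  | nil => simp [IsPathFrom]
  | cons a p ih => simp [IsPathFrom, ih, and_assoc]

theorem isPathFrom_reverse {i j : Q₀} {p : List Q₁} :
    IsPathFrom h t j p.reverse i ↔ IsPathFrom t h i p j := by
  induction p generalizing i with
  | nil => exact eq_comm
  | cons a p ih => simp [isPathFrom_append, IsPathFrom, ih, and_comm]

theorem Acyclic.opposite (hQ : Acyclic t h) : Acyclic h t := fun i p hp =>
  List.reverse_eq_nil_iff.1 (hQ i p.reverse (isPathFrom_reverse.2 hp))

theorem Acyclic.wellFounded [Finite Q₀] (hQ : Acyclic t h) :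
    WellFounded fun i j => ∃ a, t a = i ∧ h a = j := by
  have hpath : ∀ {i j}, Relation.TransGen (fun i j => ∃ a, t a = i ∧ h a = j) i j →
      ∃ p ≠ [], IsPathFrom t h i p j := fun hij => by
    induction hij with
    | single hij =>
      obtain ⟨a, ha, hb⟩ := hij
      exact ⟨[a], List.cons_ne_nil _ _, ha, hb⟩
    | tail _ hjl ih =>
      obtain ⟨a, ha, hb⟩ := hjl
      obtain ⟨p, -, hp⟩ := ih
      exact ⟨p ++ [a], by simp, isPathFrom_append.2 ⟨_, hp, ha, hb⟩⟩
  have : Std.Irrefl (Relation.TransGen fun i j => ∃ a, t a = i ∧ h a = j) := ⟨fun i hi => by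
    obtain ⟨p, hne, hp⟩ := hpath hi
    exact hne (hQ i p hp)⟩
  exact Subrelation.wf (fun hij => .single hij) (Finite.wellFounded_of_trans_of_irrefl
    (Relation.TransGen fun i j => ∃ a, t a = i ∧ h a = j))

/-- The paths from `i` to a varying vertex, extended at their end. This inductive counterpart of
`IsPathFrom` allows one to define linear maps on the path algebra by recursion. -/
inductive PathFrom (t h : Q₁ → Q₀) (i : Q₀) : Q₀ → Type
  | nil : PathFrom t h i i
  | snoc (a : Q₁) (p : PathFrom t h i (t a)) : PathFrom t h i (h a)

theorem PathFrom.finite [Finite Q₀] [Finite Q₁] (hQ : Acyclic t h) (i j : Q₀) :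
    Finite (PathFrom t h i j) := by
  induction j using hQ.wellFounded.induction with
  | _ j ih =>
    have (a : {a // h a = j}) : Finite (PathFrom t h i (t a)) := ih _ ⟨a, rfl, a.2⟩
    let build : PLift (i = j) ⊕ (Σ a : {a // h a = j}, PathFrom t h i (t a)) → PathFrom t h i j :=
      Sum.elim (fun e => e.down ▸ .nil) fun x => x.1.2 ▸ .snoc x.1.1 x.2
    have hbuild : Surjective build := fun p => by
      cases p with
      | nil => exact ⟨.inl ⟨rfl⟩, rfl⟩
      | snoc a p => exact ⟨.inr ⟨⟨a, rfl⟩, p⟩, rfl⟩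
    exact Finite.of_surjective build hbuild

variable (k : Type) [Field k] [Finite Q₀] [Finite Q₁]

/-- The indecomposable projective representation at the vertex `i`: its space at `j` has the
paths from `i` to `j` as a basis, and the arrows act by extending paths. -/
def QuivRep.projective (hQ : Acyclic t h) (i : Q₀) : QuivRep k Q₀ Q₁ t h :=
  have := PathFrom.finite hQ i
  { sp j := PathFrom t h i j →₀ k
    map a := Finsupp.lmapDomain k k (PathFrom.snoc a) }

namespace QuivRep.projective

variable {k} (hQ : Acyclic t h) {i : Q₀} {X : QuivRep k Q₀ Q₁ t h}

/-- The value at a path of the cochain on `projective k hQ i` with prescribed value `x` at the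
trivial path and prescribed coboundary `ψ`. -/
def liftFun (x : X.sp i) (ψ : ∀ a, (projective k hQ i).sp (t a) →ₗ[k] X.sp (h a)) :
    ∀ {j}, PathFrom t h i j → X.sp j
  | _, .nil => x
  | _, .snoc a p => X.map a (liftFun x ψ p) + ψ a (Finsupp.single p 1)

theorem exists_dmap_eq (x : X.sp i)
    (ψ : ∀ a, (projective k hQ i).sp (t a) →ₗ[k] X.sp (h a)) :
    ∃ φ, dmap (projective k hQ i) X φ = ψ ∧ φ i (Finsupp.single .nil 1) = x := by
  let φ (j : Q₀) : (PathFrom t h i j →₀ k) →ₗ[k] X.sp j :=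
    Finsupp.linearCombination k (liftFun hQ x ψ)
  have hφ {j : Q₀} (p : PathFrom t h i j) : φ j (.single p 1) = liftFun hQ x ψ p :=
    (Finsupp.linearCombination_single k 1 p).trans (one_smul k _)
  refine ⟨φ, funext fun a => Finsupp.lhom_ext' fun p => LinearMap.ext_ring ?_, hφ .nil⟩
  change φ (h a) (Finsupp.mapDomain _ (.single p 1)) - X.map a (φ (t a) (.single p 1)) = _
  rw [Finsupp.mapDomain_single, hφ, hφ]
  exact add_sub_cancel_left _ _

theorem extDim_eq_zero : extDim (projective k hQ i) X = 0 :=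
  extDim_eq_zero_iff.2 fun ψ => (exists_dmap_eq hQ 0 ψ).imp fun _ => And.left

theorem homDim_ne_zero (hX : X.dimVec i ≠ 0) : homDim (projective k hQ i) X ≠ 0 := by
  have : Nontrivial (X.sp i) := Module.nontrivial_of_finrank_pos (Nat.pos_of_ne_zero hX)
  obtain ⟨x, hx⟩ := exists_ne (0 : X.sp i)
  obtain ⟨φ, hφ, hφx⟩ := exists_dmap_eq hQ x 0
  refine homDim_ne_zero_iff.2 ⟨.ofDmapEqZero φ hφ, fun h0 => hx ?_⟩
  rw [← hφx]
  exact LinearMap.congr_fun (congrFun (congrArg RepHom.app h0) i) _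

end QuivRep.projective

end Projective

section RelativelyProjective

variable {k : Type} [Field k] {Q₀ Q₁ : Type} {t h : Q₁ → Q₀} {M S P : QuivRep k Q₀ Q₁ t h}

open Function

namespace QuivRep

/-- `X` lies in the right perpendicular category of `M`, the category in which the stable
representations for the weight `⟨dim M, ·⟩` live. -/
def RightPerp (M X : QuivRep k Q₀ Q₁ t h) : Prop := homDim M X = 0 ∧ extDim M X = 0

/-- `B` behaves like a projective object against the right perpendicular category of `M`. -/
def IsRelProjective (M B : QuivRep k Q₀ Q₁ t h) : Prop := ∀ X, M.RightPerp X → extDim B X = 0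

/-- A substitute for a projective cover of `S` in the right perpendicular category of `M`: only
`Ext¹(M, P) = 0` is required of `P`, so that `P` itself need not be right perpendicular to `M`. -/
structure IsRelCover (M S P : QuivRep k Q₀ Q₁ t h) : Prop where
  extDim_left_eq_zero : extDim M P = 0
  isRelProjective : M.IsRelProjective P
  homDim_ne_zero : homDim P S ≠ 0

theorem IsRelProjective.extension [Finite Q₁] (hP : M.IsRelProjective P)
    (ψ : ∀ a, M.sp (t a) →ₗ[k] P.sp (h a)) : M.IsRelProjective (extension ψ) := fun X hX =>
  (extension.shortExact ψ).extDim_middle_eq_zero (hP X hX) hX.2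

variable [Finite Q₀] [Finite Q₁]

theorem extension.homDim_ne_zero (ψ : ∀ a, M.sp (t a) →ₗ[k] P.sp (h a))
    (hMS : extDim M S = 0) (hPS : homDim P S ≠ 0) : homDim (extension ψ) S ≠ 0 := by
  obtain ⟨u, hu⟩ := homDim_ne_zero_iff.1 hPS
  obtain ⟨v, rfl⟩ := (extension.shortExact ψ).exists_extend hMS u
  exact homDim_ne_zero_iff.2 ⟨v, fun hv => hu (hv ▸ RepHom.comp_zero _)⟩

theorem IsRelProjective.exists_isRelCover (hM : M.IsRigid) (hMS : extDim M S = 0)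
    (hP : M.IsRelProjective P) (hPS : homDim P S ≠ 0) : ∃ B, M.IsRelCover S B := by
  obtain ⟨B, ⟨hB, hBS⟩, hmin⟩ := exists_minimalFor_of_wellFoundedLT
    (fun B => M.IsRelProjective B ∧ homDim B S ≠ 0) (extDim M) ⟨P, hP, hPS⟩
  refine ⟨B, extDim_eq_zero_iff.2 fun ψ => of_not_not fun hψ => ?_, hB, hBS⟩
  have hlt := extension.extDim_lt ψ hM hψ
  exact hlt.not_ge (hmin ⟨hB.extension ψ, extension.homDim_ne_zero ψ hMS hBS⟩ hlt.le)

theorem exists_isRelCover (hQ : Acyclic t h) (hM : M.IsRigid) (hMS : extDim M S = 0)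
    (hS : S.dimVec ≠ fun _ => 0) : ∃ P, M.IsRelCover S P := by
  obtain ⟨i, hi⟩ := Function.ne_iff.1 hS
  have hproj : M.IsRelProjective (projective k hQ i) := fun _ _ =>
    projective.extDim_eq_zero hQ
  exact hproj.exists_isRelCover hM hMS (projective.homDim_ne_zero hQ hi)

end QuivRep

end RelativelyProjective

section TotalDim

variable {k : Type} [Field k] {Q₀ Q₁ : Type} [Fintype Q₀] {t h : Q₁ → Q₀}
  {X Y : QuivRep k Q₀ Q₁ t h}

/-- The dimension of the total space `⨁ i, X(i)`. -/
def QuivRep.totalDim (X : QuivRep k Q₀ Q₁ t h) : ℕ := ∑ i, X.dimVec i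

theorem RepHom.totalDim_ker_lt {f : RepHom X Y} (hf : f ≠ 0) :
    f.ker.toRep.totalDim < X.totalDim := by
  have hle (i : Q₀) : f.ker.toRep.dimVec i ≤ X.dimVec i := (f.ker.sub i).finrank_le
  refine lt_of_le_of_ne (Finset.sum_le_sum fun i _ => hle i) fun heq => hf ?_
  have hdim := (Finset.sum_eq_sum_iff_of_le fun i _ => hle i).1 heq
  exact RepHom.ext <| funext fun i => LinearMap.ker_eq_top.1
    (Submodule.eq_top_of_finrank_eq (hdim i (Finset.mem_univ i)))

end TotalDim

section StableCover

open Function QuivRep Matrix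

variable {k : Type} [Field k] {Q₀ Q₁ : Type} [Fintype Q₀] [DecidableEq Q₀] [Fintype Q₁]
  {t h : Q₁ → Q₀} {M S S' P X : QuivRep k Q₀ Q₁ t h}

theorem weightL_dotProduct_dimVec (M X : QuivRep k Q₀ Q₁ t h) :
    weightL t h (natZ M.dimVec) ⬝ᵥ natZ X.dimVec = homDim M X - extDim M X := by
  rw [weightL_dotProduct, homDim_sub_extDim_eq_eulerForm]

theorem IsStable.surjective_of_extDim_eq_zero (hS : IsStable k (weightL t h (natZ M.dimVec)) S)
    (hMX : extDim M X = 0) {f : RepHom X S} (hf : f ≠ 0) (i : Q₀) : Surjective (f.app i) := by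
  refine hS.surjective_of_nonneg hf ?_ i
  have hext : extDim M f.range.toRep = 0 := extDim_eq_zero_of_surjective f.rangeRestrict
    (fun i => (f.app i).surjective_rangeRestrict) hMX
  have hweight := weightL_dotProduct_dimVec M f.range.toRep
  rw [hext, Nat.cast_zero, sub_zero] at hweight
  exact hweight.symm ▸ Nat.cast_nonneg _

theorem IsStable.rightPerp (hM : M.IsRigid) (hS : IsStable k (weightL t h (natZ M.dimVec)) S) :
    M.RightPerp S := by
  have hweight := weightL_dotProduct_dimVec M S
  rw [hS.dotProduct_dimVec_eq_zero] at hweight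
  have hhom : homDim M S = 0 := by
    by_contra hne
    obtain ⟨f, hf⟩ := homDim_ne_zero_iff.1 hne
    have hext := extDim_eq_zero_of_surjective f (hS.surjective_of_extDim_eq_zero hM hf) hM
    omega
  exact ⟨hhom, by omega⟩

namespace QuivRep.IsRelCover

theorem ker (hM : M.IsRigid) (hP : M.IsRelCover S P)
    (hS' : IsStable k (weightL t h (natZ M.dimVec)) S') {f : RepHom P S'} (hf : f ≠ 0)
    (hker : homDim f.ker.toRep S ≠ 0) : M.IsRelCover S f.ker.toRep where
  extDim_left_eq_zero := by
    have hsurj := hS'.surjective_of_extDim_eq_zero hP.extDim_left_eq_zero hf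
    exact (f.shortExact_ker hsurj).extDim_left_eq_zero (hS'.rightPerp hM).1
      hP.extDim_left_eq_zero
  isRelProjective X hX := extDim_eq_zero_of_injective f.ker.subtype
    (fun i => (f.ker.sub i).subtype_injective) (hP.isRelProjective X hX)
  homDim_ne_zero := hker

end QuivRep.IsRelCover

/-- A relative cover of smallest dimension. -/
def QuivRep.IsMinRelCover (M S P : QuivRep k Q₀ Q₁ t h) : Prop :=
  MinimalFor (M.IsRelCover S) totalDim P

namespace QuivRep.IsMinRelCover

theorem homDim_ker_eq_zero (hM : M.IsRigid) (hP : M.IsMinRelCover S P)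
    (hS' : IsStable k (weightL t h (natZ M.dimVec)) S') {f : RepHom P S'} (hf : f ≠ 0) :
    homDim f.ker.toRep S = 0 := by
  by_contra hker
  have hlt := RepHom.totalDim_ker_lt hf
  exact hlt.not_ge (hP.2 (hP.1.ker hM hS' hf hker) hlt.le)

theorem isRigid (hM : M.IsRigid) (hP : M.IsMinRelCover S P)
    (hS : IsStable k (weightL t h (natZ M.dimVec)) S) : S.IsRigid := by
  obtain ⟨f, hf⟩ := homDim_ne_zero_iff.1 hP.1.homDim_ne_zero
  have hsurj := hS.surjective_of_extDim_eq_zero hP.1.extDim_left_eq_zero hf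
  exact (f.shortExact_ker hsurj).extDim_right_eq_zero (hP.homDim_ker_eq_zero hM hS hf)
    (hP.1.isRelProjective S (hS.rightPerp hM))

theorem homDim_eq_zero (hM : M.IsRigid) (hP : M.IsMinRelCover S P)
    (hS : IsStable k (weightL t h (natZ M.dimVec)) S)
    (hS' : IsStable k (weightL t h (natZ M.dimVec)) S') (hSS' : ¬RepIso k S' S) :
    homDim P S' = 0 := by
  by_contra hne
  obtain ⟨f, hf⟩ := homDim_ne_zero_iff.1 hne
  obtain ⟨u, hu⟩ := homDim_ne_zero_iff.1 hP.1.homDim_ne_zero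
  have hsurj := hS'.surjective_of_extDim_eq_zero hP.1.extDim_left_eq_zero hf
  obtain ⟨v, rfl⟩ := (f.shortExact_ker hsurj).exists_desc u
    (homDim_eq_zero_iff.1 (hP.homDim_ker_eq_zero hM hS' hf) _)
  have hv : v ≠ 0 := fun h0 => hu (h0 ▸ f.comp_zero)
  exact hSS' (hS'.repIso_of_homDim_ne_zero hS (homDim_ne_zero_iff.2 ⟨v, hv⟩))

end QuivRep.IsMinRelCover

end StableCover

section CardBound

theorem card_lt_finrank_of_pairing {R N : Type*} [CommRing R] [IsDomain R] [AddCommGroup N]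
    [Module R N] [Module.Finite R N] {l : ℕ} {x : Fin l → N} {f : Fin l → N →ₗ[R] R}
    {y : N} {g : N →ₗ[R] R} (hdiag : ∀ j, f j (x j) ≠ 0) (hoff : ∀ j k, j ≠ k → f j (x k) = 0)
    (hgx : ∀ j, g (x j) = 0) (hgy : g y ≠ 0) : l < Module.finrank R N := by
  have hx : LinearIndependent R x := Fintype.linearIndependent_iff.2 fun c hc j => by
    have hj := congrArg (f j) hc
    rw [map_sum, map_zero, Fintype.sum_eq_single j fun m hm => by
      rw [map_smul, hoff j m hm.symm, smul_zero], map_smul, smul_eq_mul] at hj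
    exact (mul_eq_zero.1 hj).resolve_right (hdiag j)
  have hspan : Submodule.span R (Set.range x) ≤ LinearMap.ker g :=
    Submodule.span_le.2 (Set.range_subset_iff.2 hgx)
  have hyx : LinearIndependent R (Fin.cons y x : Fin (l + 1) → N) :=
    hx.finCons' y x fun c z hz hcz => by
      have hg := congrArg g hcz
      rw [map_add, map_smul, show g z = 0 from hspan hz, add_zero, map_zero, smul_eq_mul] at hg
      exact (mul_eq_zero.1 hg).resolve_right hgy
  exact (Fintype.card_fin (l + 1)).symm.trans_le hyx.fintype_card_le_finrank

open QuivRep Matrix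

variable {k : Type} [Field k] {Q₀ Q₁ : Type} [Fintype Q₀] [DecidableEq Q₀] [Fintype Q₁]
  {t h : Q₁ → Q₀} {M S : QuivRep k Q₀ Q₁ t h}

theorem exists_isMinRelCover (hQ : Acyclic t h) (hM : M.IsRigid)
    (hS : IsStable k (weightL t h (natZ M.dimVec)) S) : ∃ P, M.IsMinRelCover S P :=
  exists_minimalFor_of_wellFoundedLT _ _ (exists_isRelCover hQ hM (hS.rightPerp hM).2 hS.2.1)

theorem IsStable.isRigid_of_weightL (hQ : Acyclic t h) (hM : M.IsRigid)
    (hS : IsStable k (weightL t h (natZ M.dimVec)) S) : S.IsRigid := by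
  obtain ⟨P, hP⟩ := exists_isMinRelCover hQ hM hS
  exact hP.isRigid hM hS

theorem IsStable.card_lt_of_weightL (hQ : Acyclic t h) (hM : M.IsRigid)
    (hM0 : M.dimVec ≠ fun _ => 0) {l : ℕ} {E : Fin l → QuivRep k Q₀ Q₁ t h}
    (hE : ∀ j, IsStable k (weightL t h (natZ M.dimVec)) (E j))
    (hEE : Pairwise fun j m => ¬RepIso k (E j) (E m)) : l < Fintype.card Q₀ := by
  choose P hP using fun j => exists_isMinRelCover hQ hM (hE j)
  have hpair (j m : Fin l) : weightL t h (natZ (P j).dimVec) ⬝ᵥ natZ (E m).dimVec =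
      homDim (P j) (E m) := by
    rw [weightL_dotProduct_dimVec, (hP j).1.isRelProjective _ ((hE m).rightPerp hM),
      Nat.cast_zero, sub_zero]
  rw [← Module.finrank_fintype_fun_eq_card ℤ]
  refine card_lt_finrank_of_pairing (x := fun j => natZ (E j).dimVec) (y := natZ M.dimVec)
    (f := fun j => dotProductBilin ℤ ℤ (weightL t h (natZ (P j).dimVec)))
    (g := dotProductBilin ℤ ℤ (weightL t h (natZ M.dimVec))) ?_ ?_ ?_ ?_
  · exact fun j => (hpair j j).trans_ne (Nat.cast_ne_zero.2 (hP j).1.homDim_ne_zero)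
  · exact fun j m hjm => (hpair j m).trans
      (congrArg Nat.cast ((hP j).homDim_eq_zero hM (hE j) (hE m) (hEE hjm.symm)))
  · exact fun j => (hE j).dotProduct_dimVec_eq_zero
  · change weightL t h (natZ M.dimVec) ⬝ᵥ natZ M.dimVec ≠ 0
    rw [weightL_dotProduct_dimVec, hM, Nat.cast_zero, sub_zero]
    exact Nat.cast_ne_zero.2 (homDim_ne_zero_iff.2 ⟨_, RepHom.idHom_ne_zero hM0⟩)

end CardBound

section Duality

open Module QuivRep Matrix

theorem dualMap_bijective {k V W : Type*} [Field k] [AddCommGroup V] [Module k V]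
    [AddCommGroup W] [Module k W] [FiniteDimensional k V] [FiniteDimensional k W] :
    Function.Bijective (LinearMap.dualMap : (V →ₗ[k] W) → _) := by
  refine ⟨fun f g hfg => LinearMap.ext fun x => ?_, fun F => ?_⟩
  · exact (evalEquiv k W).injective
      (LinearMap.ext fun φ => LinearMap.congr_fun (LinearMap.congr_fun hfg φ) x)
  · refine ⟨(evalEquiv k W).symm ∘ₗ F.dualMap ∘ₗ (evalEquiv k V).toLinearMap,
      LinearMap.ext fun φ => LinearMap.ext fun x => ?_⟩
    exact apply_evalEquiv_symm_apply k W φ _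

variable {k : Type} [Field k] {Q₀ Q₁ : Type} {t h : Q₁ → Q₀} {X Y : QuivRep k Q₀ Q₁ t h}

namespace QuivRep

/-- The `k`-linear dual of a representation, which is a representation of the opposite quiver. -/
def dual (X : QuivRep k Q₀ Q₁ t h) : QuivRep k Q₀ Q₁ h t where
  sp i := Dual k (X.sp i)
  map a := (X.map a).dualMap

theorem dimVec_dual (X : QuivRep k Q₀ Q₁ t h) : X.dual.dimVec = X.dimVec :=
  funext fun _ => Subspace.dual_finrank_eq

theorem dmap_dual (φ : ∀ i, X.sp i →ₗ[k] Y.sp i) :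
    dmap Y.dual X.dual (-fun i => (φ i).dualMap) = fun a => (dmap X Y φ a).dualMap :=
  funext fun a => LinearMap.ext fun (f : Dual k (Y.sp (h a))) => LinearMap.ext fun x => by
    change -f (Y.map a (φ (t a) x)) - -f (φ (h a) (X.map a x)) =
      f (φ (h a) (X.map a x) - Y.map a (φ (t a) x))
    rw [map_sub, neg_sub_neg]

theorem extDim_dual_eq_zero_iff [Finite Q₁] : extDim Y.dual X.dual = 0 ↔ extDim X Y = 0 := by
  rw [extDim_eq_zero_iff, extDim_eq_zero_iff]
  constructor
  · intro hsurj ψ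
    obtain ⟨Φ, hΦ⟩ := hsurj fun a => (ψ a).dualMap
    choose φ hφ using fun i => dualMap_bijective.2 ((-Φ) i)
    have hφΦ : (-fun i => (φ i).dualMap : ∀ i, Y.dual.sp i →ₗ[k] X.dual.sp i) = Φ :=
      neg_eq_iff_eq_neg.2 (funext hφ)
    refine ⟨φ, funext fun a => dualMap_bijective.1 ?_⟩
    exact congrFun ((dmap_dual φ).symm.trans (hφΦ ▸ hΦ)) a
  · intro hsurj Ψ
    choose ψ hψ using fun a => dualMap_bijective.2 (Ψ a)
    obtain ⟨φ, rfl⟩ := hsurj ψ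
    exact ⟨_, (dmap_dual φ).trans (funext hψ)⟩

/-- The annihilator of a subrepresentation of the dual. -/
def Sub.annihilator (U : Sub X.dual) : Sub X where
  sub i := Submodule.dualCoannihilator (U.sub i)
  le a x hx := (Submodule.mem_dualCoannihilator _).2 fun f hf =>
    (Submodule.mem_dualCoannihilator x).1 hx _ (U.le a f hf)

theorem Sub.dimVec_add_dimVec_annihilator (U : Sub X.dual) :
    U.dimVec + U.annihilator.dimVec = X.dimVec :=
  funext fun i => Subspace.finrank_add_finrank_dualCoannihilator_eq (U.sub i)

end QuivRep

theorem RepIso.of_dual (hXY : RepIso k X.dual Y.dual) : RepIso k Y X := by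
  obtain ⟨e, he⟩ := hXY
  choose φ hφ using fun i => dualMap_bijective.2 (e i).toLinearMap
  have he0 : dmap X.dual Y.dual (-fun i => (e i).toLinearMap) = 0 := by
    rw [map_neg, neg_eq_zero]
    exact funext fun a => sub_eq_zero.2 (LinearMap.ext (he a))
  have hφ0 : dmap Y X φ = 0 := funext fun a => dualMap_bijective.1 <|
    (congrFun ((dmap_dual φ).symm.trans (funext hφ ▸ he0)) a).trans (map_zero Dual.transpose).symm
  refine (RepHom.ofDmapEqZero φ hφ0).repIso_of_bijective fun i => ?_
  refine LinearMap.dualMap_bijective_iff.1 ?_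
  exact (hφ i).symm ▸ (e i).bijective

theorem IsStable.dual [Fintype Q₀] {σ : Q₀ → ℤ} (hX : IsStable k σ X) :
    IsStable k (-σ) X.dual := by
  have hneg (α : Q₀ → ℕ) : -σ ⬝ᵥ natZ α = -(σ ⬝ᵥ natZ α) := neg_dotProduct _ _
  have hX0 := hX.dotProduct_dimVec_eq_zero
  refine ⟨?_, X.dimVec_dual.symm ▸ hX.2.1, fun U hU0 hUX => ?_⟩
  · rw [dimVec_dual]
    exact (hneg _).trans (neg_eq_zero.2 hX0)
  have hadd := U.dimVec_add_dimVec_annihilator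
  have hlt : σ ⬝ᵥ natZ U.annihilator.dimVec < 0 := hX.2.2 _
    (fun h0 => hUX (by rw [dimVec_dual, ← hadd, h0]; rfl))
    (fun htop => hU0 (add_eq_right.1 (htop ▸ hadd)))
  rw [← hadd, natZ_add, dotProduct_add] at hX0
  exact (hneg _).trans_lt (by linarith)

end Duality

section Finiteness

open QuivRep

theorem exists_fin_transversal {T : Type*} {r : T → T → Prop} (hr : ∀ {x y}, r x y → r y x)
    {p : T → Prop} {N : ℕ}
    (hN : ∀ (l : ℕ) (x : Fin l → T), (∀ j, p (x j)) → (Pairwise fun j m => ¬r (x j) (x m)) →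
      l ≤ N) :
    ∃ (l : ℕ) (x : Fin l → T), (∀ j, p (x j)) ∧ (Pairwise fun j m => ¬r (x j) (x m)) ∧
      ∀ y, p y → ∃ j, r y (x j) := by
  let HasFamily (l : ℕ) : Prop :=
    ∃ x : Fin l → T, (∀ j, p (x j)) ∧ Pairwise fun j m => ¬r (x j) (x m)
  have hbdd : BddAbove {l | HasFamily l} := ⟨N, fun l hl => hl.elim fun x hx => hN l x hx.1 hx.2⟩
  have hne : {l | HasFamily l}.Nonempty := ⟨0, Fin.elim0, fun j => j.elim0, fun j => j.elim0⟩
  obtain ⟨x, hp, hx⟩ : HasFamily (sSup {l | HasFamily l}) := Nat.sSup_mem hne hbdd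
  refine ⟨_, x, hp, hx, fun y hy => ?_⟩
  by_contra! hyx
  have hcons : HasFamily (sSup {l | HasFamily l} + 1) := by
    refine ⟨Fin.cons y x, Fin.cases hy hp, ?_⟩
    refine Fin.cases (Fin.cases (fun h0 => (h0 rfl).elim) fun m _ => hyx m) fun j => ?_
    exact Fin.cases (fun _ => mt hr (hyx j)) fun m hjm => hx (ne_of_apply_ne Fin.succ hjm)
  exact (Nat.lt_succ_self _).not_ge (le_csSup hbdd hcons)

variable {k : Type} [Field k] {Q₀ Q₁ : Type} {t h : Q₁ → Q₀}

theorem RepIso.symm {X Y : QuivRep k Q₀ Q₁ t h} (hXY : RepIso k X Y) : RepIso k Y X := by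
  obtain ⟨e, he⟩ := hXY
  refine ⟨fun i => (e i).symm, fun a y => (LinearEquiv.symm_apply_eq _).2 ?_⟩
  rw [he, LinearEquiv.apply_symm_apply]

variable [Fintype Q₀] [DecidableEq Q₀] [Fintype Q₁] {M : QuivRep k Q₀ Q₁ t h} {σ : Q₀ → ℤ}

theorem IsStable.dual_of_weightR {S : QuivRep k Q₀ Q₁ t h}
    (hS : IsStable k (weightR t h (natZ M.dimVec)) S) :
    IsStable k (weightL h t (natZ M.dual.dimVec)) S.dual := by
  rw [dimVec_dual, ← neg_weightR]
  exact hS.dual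

theorem IsStable.isRigid (hQ : Acyclic t h) (hM : M.IsRigid)
    (hσ : σ = weightL t h (natZ M.dimVec) ∨ σ = weightR t h (natZ M.dimVec))
    {S : QuivRep k Q₀ Q₁ t h} (hS : IsStable k σ S) : S.IsRigid := by
  rcases hσ with rfl | rfl
  · exact hS.isRigid_of_weightL hQ hM
  · exact extDim_dual_eq_zero_iff.1
      (hS.dual_of_weightR.isRigid_of_weightL hQ.opposite (extDim_dual_eq_zero_iff.2 hM))

theorem IsStable.card_lt (hQ : Acyclic t h) (hM : M.IsRigid) (hM0 : M.dimVec ≠ fun _ => 0)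
    (hσ : σ = weightL t h (natZ M.dimVec) ∨ σ = weightR t h (natZ M.dimVec)) {l : ℕ}
    {E : Fin l → QuivRep k Q₀ Q₁ t h} (hE : ∀ j, IsStable k σ (E j))
    (hEE : Pairwise fun j m => ¬RepIso k (E j) (E m)) : l < Fintype.card Q₀ := by
  rcases hσ with rfl | rfl
  · exact card_lt_of_weightL hQ hM hM0 hE hEE
  · exact card_lt_of_weightL hQ.opposite (extDim_dual_eq_zero_iff.2 hM)
      (M.dimVec_dual.symm ▸ hM0) (fun j => (hE j).dual_of_weightR)
      fun j m hjm => mt RepIso.of_dual (hEE hjm.symm)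

end Finiteness

theorem stmt3_general [IsAlgClosed K] (t h : A → V) (hQ : Acyclic t h)
    (α : V → ℕ) (hα : α ≠ (fun _ => 0))
    (hpre : ∃ X : QuivRep K V A t h, X.dimVec = α ∧ X.IsRigid)
    (σ : V → ℤ) (hσ : σ = weightL t h (natZ α) ∨ σ = weightR t h (natZ α)) :
    ∃ (l : ℕ) (E : Fin l → QuivRep K V A t h),
      l ≤ Fintype.card V - 1 ∧
      (∀ j, IsStable K σ (E j) ∧ (E j).IsExceptional) ∧
      (∀ j k, j ≠ k → ¬ RepIso K (E j) (E k)) ∧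
      (∀ W : QuivRep K V A t h, IsStable K σ W → ∃ j, RepIso K W (E j)) := by
  obtain ⟨M, rfl, hM⟩ := hpre
  obtain ⟨l, E, hE, hEE, hall⟩ := exists_fin_transversal
    (r := RepIso K) (p := IsStable K σ) RepIso.symm
    fun _ _ hE hEE => (IsStable.card_lt hQ hM hα hσ hE hEE).le
  exact ⟨l, E, Nat.le_pred_of_lt (IsStable.card_lt hQ hM hα hσ hE hEE),
    fun j => ⟨hE j, (hE j).isRigid hQ hM hσ, (hE j).isSchur⟩, fun _ _ => @hEE _ _, hall⟩

/-- For a non-zero pre-homogeneous `α` and `σ = ⟨α,·⟩` or `−⟨·,α⟩` there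
are, up to isomorphism, finitely many `σ`-stable representations `E_1, …, E_l`, with
`l ≤ |Q_0| − 1`, and each of them is exceptional. -/
theorem stmt3 [IsAlgClosed K] [CharZero K] (t h : A → V) (hQ : Acyclic t h)
    (α : V → ℕ) (hα : α ≠ (fun _ => 0))
    (hpre : ∃ X : QuivRep K V A t h, X.dimVec = α ∧ X.IsRigid)
    (σ : V → ℤ) (hσ : σ = weightL t h (natZ α) ∨ σ = weightR t h (natZ α)) :
    ∃ (l : ℕ) (E : Fin l → QuivRep K V A t h),
      l ≤ Fintype.card V - 1 ∧
      (∀ j, IsStable K σ (E j) ∧ (E j).IsExceptional) ∧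
      (∀ j k, j ≠ k → ¬ RepIso K (E j) (E k)) ∧
      (∀ W : QuivRep K V A t h, IsStable K σ W → ∃ j, RepIso K W (E j)) := by
  exact stmt3_general K t h hQ α hα hpre σ hσ

end
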